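/- For real parameters μ < −4 and t < 0 with t²/4 + μ − 1 > 0 (the parameter lies outside the parabola μ = 1 − t²/4), define f_{μ,t} : ℝ → ℝ by f_{μ,t}(x) = 2μx(tx+2)/(μ²x² + (tx+2)²); it maps the interval [−1,1] into itself. Then the topological entropy of the induced self-map of [−1,1] equals log 2. -/

import Mathlib

open Set in
lemma aux_grid (ε : ℝ) (hε : 0 < ε) : ∃ G : Finset ℝ, ∀ a b : ℝ, -1 ≤ a → b ≤ 1 → a + ε ≤ b →
    ∃ g ∈ G, a < g ∧ g < b := by
  classical
  refine ⟨(Finset.range (⌊4 / ε⌋₊ + 2)).image (fun j : ℕ => -1 + (j : ℝ) * (ε / 2)), ?_⟩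
  intro a b ha hb hab
  have h0 : 0 ≤ (a + 1) / (ε / 2) := by
    apply div_nonneg <;> linarith
  refine ⟨-1 + ((⌊(a + 1) / (ε / 2)⌋₊ + 1 : ℕ) : ℝ) * (ε / 2), ?_, ?_, ?_⟩
  · refine Finset.mem_image_of_mem _ ?_
    rw [Finset.mem_range]
    have : ⌊(a + 1) / (ε / 2)⌋₊ ≤ ⌊4 / ε⌋₊ := by
      apply Nat.floor_le_floor
      rw [div_le_div_iff₀ (by linarith) hε]
      nlinarith
    omega
  · have := Nat.lt_floor_add_one ((a + 1) / (ε / 2))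
    rw [div_lt_iff₀ (by linarith)] at this
    push_cast
    linarith
  · have := Nat.floor_le h0
    rw [le_div_iff₀ (by linarith)] at this
    push_cast
    linarith

lemma aux_preim (f : ℝ → ℝ) (h2 : ∀ y, ∃ P : Finset ℝ, P.card ≤ 2 ∧ ∀ x, f x = y → x ∈ P)
    (G : Finset ℝ) (k : ℕ) :
    ∃ P : Finset ℝ, P.card ≤ 2 ^ k * G.card ∧ ∀ x, f^[k] x ∈ G → x ∈ P := by
  classical
  induction k with
  | zero => exact ⟨G, by simp, fun x hx => by simpa using hx⟩
  | succ k ih =>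
    obtain ⟨P, hP, hPm⟩ := ih
    choose Q hQ hQm using h2
    refine ⟨P.biUnion Q, ?_, ?_⟩
    · have := Finset.card_biUnion_le_card_mul P Q 2 (fun y _ => hQ y)
      calc _ ≤ _ := this
        _ ≤ (2 ^ k * G.card) * 2 := by gcongr
        _ = _ := by ring
    · intro x hx
      rw [Function.iterate_succ_apply] at hx
      exact Finset.mem_biUnion.2 ⟨f x, hPm _ hx, hQm _ _ rfl⟩

lemma aux_preim_all (f : ℝ → ℝ) (h2 : ∀ y, ∃ P : Finset ℝ, P.card ≤ 2 ∧ ∀ x, f x = y → x ∈ P)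
    (G : Finset ℝ) (n : ℕ) :
    ∃ P : Finset ℝ, P.card + G.card ≤ 2 ^ n * G.card ∧ ∀ k < n, ∀ x, f^[k] x ∈ G → x ∈ P := by
  classical
  induction n with
  | zero => exact ⟨∅, by simp, by simp⟩
  | succ n ih =>
    obtain ⟨P, hP, hPm⟩ := ih
    obtain ⟨Q, hQ, hQm⟩ := aux_preim f h2 G n
    refine ⟨P ∪ Q, ?_, ?_⟩
    · have := Finset.card_union_le P Q
      rw [pow_succ]
      linarith
    · intro k hk x hx
      rcases Nat.lt_succ_iff_lt_or_eq.1 hk with h | rfl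
      · exact Finset.mem_union_left _ (hPm k h x hx)
      · exact Finset.mem_union_right _ (hQm x hx)

open Dynamics ExpGrowth in
lemma aux_upper (f : ℝ → ℝ) (hf : Continuous f)
    (hm : Set.MapsTo f (Set.Icc (-1 : ℝ) 1) (Set.Icc (-1 : ℝ) 1))
    (h2 : ∀ y, ∃ P : Finset ℝ, P.card ≤ 2 ∧ ∀ x, f x = y → x ∈ P) :
    coverEntropy (Set.MapsTo.restrict f _ _ hm) Set.univ ≤ (Real.log 2 : EReal) := by
  classical
  rw [coverEntropy_eq_iSup_basis Metric.uniformity_basis_dist]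
  refine iSup₂_le fun ε hε => ?_
  obtain ⟨G, hG⟩ := aux_grid ε hε
  have key : ∀ n : ℕ, coverMincard (Set.MapsTo.restrict f _ _ hm) Set.univ
      {p : Set.Icc (-1 : ℝ) 1 × Set.Icc (-1 : ℝ) 1 | dist p.1 p.2 < ε} n
        ≤ (((G.card + 1) * 2 ^ n : ℕ) : ℕ∞) := by
    intro n
    obtain ⟨P, hP, hPm⟩ := aux_preim_all f h2 G n
    have hc : (insert (⟨-1, by simp⟩ : Set.Icc (-1 : ℝ) 1)
        (P.subtype (· ∈ Set.Icc (-1 : ℝ) 1))).card ≤ (G.card + 1) * 2 ^ n := by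
      refine (Finset.card_insert_le _ _).trans ?_
      rw [Finset.card_subtype]
      have h1 := Finset.card_filter_le P (· ∈ Set.Icc (-1 : ℝ) 1)
      have h3 : 1 ≤ 2 ^ n := Nat.one_le_two_pow
      nlinarith
    set S := insert (⟨-1, by simp⟩ : Set.Icc (-1 : ℝ) 1)
        (P.subtype (· ∈ Set.Icc (-1 : ℝ) 1)) with hS
    have hcov : IsDynCoverOf (Set.MapsTo.restrict f _ _ hm) Set.univ
      {p : Set.Icc (-1 : ℝ) 1 × Set.Icc (-1 : ℝ) 1 | dist p.1 p.2 < ε} n (S : Set _) := by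
      intro x _
      have hne : (S.filter (· ≤ x)).Nonempty := 
        ⟨⟨-1, by simp⟩, Finset.mem_filter.2 ⟨Finset.mem_insert_self _ _, x.2.1⟩⟩
      set s := (S.filter (· ≤ x)).max' hne with hs
      have hsm := Finset.max'_mem _ hne
      rw [← hs, Finset.mem_filter] at hsm
      refine ⟨s, hsm.1, ?_⟩
      rw [mem_dynEntourage]
      intro k hk
      change dist _ _ < ε
      rw [hm.iterate_restrict k, Subtype.dist_eq, Set.MapsTo.val_restrict_apply,
        Set.MapsTo.val_restrict_apply]
      by_contra hcon
      push Not at hcon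
      have hIs := hm.iterate k s.2
      have hIx := hm.iterate k x.2
      have hsx : (s : ℝ) ≤ x := hsm.2
      have hcont : ContinuousOn (f^[k]) (Set.Icc (s : ℝ) x) := (hf.iterate k).continuousOn
      have : ∃ z ∈ Set.Ioo (s : ℝ) x, f^[k] z ∈ G := by
        rw [Real.dist_eq] at hcon
        rcases le_abs.1 hcon with h | h
        · obtain ⟨g, hg, h1, h3⟩ := hG (f^[k] s) (f^[k] x) hIs.1 hIx.2 (by linarith)
          obtain ⟨z, hz, hzg⟩ := intermediate_value_Ioo hsx hcont ⟨h1, h3⟩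
          exact ⟨z, hz, hzg ▸ hg⟩
        · obtain ⟨g, hg, h1, h3⟩ := hG (f^[k] x) (f^[k] s) hIx.1 hIs.2 (by linarith)
          obtain ⟨z, hz, hzg⟩ := intermediate_value_Ioo' hsx hcont ⟨h1, h3⟩
          exact ⟨z, hz, hzg ▸ hg⟩
      obtain ⟨z, hz, hzg⟩ := this
      have hzI : z ∈ Set.Icc (-1 : ℝ) 1 := ⟨s.2.1.trans hz.1.le, hz.2.le.trans x.2.2⟩
      have hzS : (⟨z, hzI⟩ : Set.Icc (-1 : ℝ) 1) ∈ S.filter (· ≤ x) := by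
        rw [Finset.mem_filter]
        refine ⟨Finset.mem_insert_of_mem ?_, hz.2.le⟩
        rw [Finset.mem_subtype]
        exact hPm k hk z hzg
      have hle := Finset.le_max' _ _ hzS
      rw [← hs] at hle
      exact absurd hz.1 (not_lt.2 hle)
    exact hcov.coverMincard_le_card.trans (by exact_mod_cast hc)
  have hb : ∀ b : ENNReal, expGrowthSup (fun n => b ^ n) = ENNReal.log b := fun b => expGrowthSup_pow
  have hlog : ENNReal.log 2 = (Real.log 2 : EReal) := by
    rw [← ENNReal.log_ofReal_of_pos (by norm_num)]
    simp
  calc _ ≤ expGrowthSup ((fun _ => ((G.card + 1 : ℕ) : ENNReal)) * (fun n : ℕ => (2 : ENNReal) ^ n)) := by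
        refine expGrowthSup_monotone fun n => ?_
        have := ENat.toENNReal_mono (key n)
        refine this.trans (le_of_eq ?_)
        simp
    _ ≤ _ := expGrowthSup_mul_le ?_ ?_
    _ = _ := by
      rw [expGrowthSup_const (by simp) (by finiteness), hb, hlog, zero_add]
  · left; rw [expGrowthSup_const (by simp) (by finiteness)]; simp
  · left; rw [expGrowthSup_const (by simp) (by finiteness)]; simp

lemma aux_itin (f : ℝ → ℝ) (hf : Continuous f) (a m b : ℝ) (ham : a ≤ m) (hmb : m ≤ b)
    (hfa : f a = b) (hfb : f b = b) (hfm : f m ≤ a) (n : ℕ) : ∀ w : ℕ → Bool,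
    ∃ x ∈ Set.Icc a b, ∀ k < n, a ≤ f^[k + 1] x ∧
      if w k then f^[k] x ≤ m else m ≤ f^[k] x := by
  induction n with
  | zero => exact fun w => ⟨a, ⟨le_rfl, ham.trans hmb⟩, by simp⟩
  | succ n ih =>
    intro w
    obtain ⟨y, hy, hyk⟩ := ih (fun k => w (k + 1))
    have : ∃ x ∈ Set.Icc a b, f x = y ∧ if w 0 then x ≤ m else m ≤ x := by
      cases w 0
      · obtain ⟨x, hx, hxy⟩ := intermediate_value_Icc hmb hf.continuousOn
          (show y ∈ Set.Icc (f m) (f b) from ⟨hfm.trans hy.1, hy.2.trans hfb.ge⟩)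
        exact ⟨x, ⟨ham.trans hx.1, hx.2⟩, hxy, by simpa using hx.1⟩
      · obtain ⟨x, hx, hxy⟩ := intermediate_value_Icc' ham hf.continuousOn
          (show y ∈ Set.Icc (f m) (f a) from ⟨hfm.trans hy.1, hy.2.trans hfa.ge⟩)
        exact ⟨x, ⟨hx.1, hx.2.trans hmb⟩, hxy, by simpa using hx.2⟩
    obtain ⟨x, hx, hxy, hw⟩ := this
    refine ⟨x, hx, ?_⟩
    intro k hk
    cases k with
    | zero => exact ⟨by simpa [hxy] using hy.1, by simpa using hw⟩
    | succ k =>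
      rw [Function.iterate_succ_apply f (k + 1), Function.iterate_succ_apply f k x, hxy]
      exact hyk k (by omega)

open Dynamics ExpGrowth in
lemma aux_lower (f : ℝ → ℝ) (hf : Continuous f)
    (hm : Set.MapsTo f (Set.Icc (-1 : ℝ) 1) (Set.Icc (-1 : ℝ) 1))
    (a m b : ℝ) (ha : -1 ≤ a) (hb1 : b ≤ 1) (ham : a ≤ m) (hmb : m ≤ b)
    (hfa : f a = b) (hfb : f b = b) (hfm : f m < a) :
    (Real.log 2 : EReal) ≤ coverEntropy (Set.MapsTo.restrict f _ _ hm) Set.univ := by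
  classical
  obtain ⟨δ, hδ, hδf⟩ := Metric.eventually_nhds_iff.1 (hf.continuousAt.eventually_lt_const hfm)
  have hfar : ∀ x, a ≤ f x → δ ≤ |x - m| := by
    intro x hx
    by_contra h
    push Not at h
    exact absurd (hδf (by rwa [Real.dist_eq])) (not_lt.2 hx)
  refine le_trans ?_ (netEntropyEntourage_le_coverEntropy _ _ (Metric.dist_mem_uniformity hδ))
  have key : ∀ n : ℕ, ((2 ^ n : ℕ) : ℕ∞) ≤ netMaxcard (Set.MapsTo.restrict f _ _ hm) Set.univ
      {p : Set.Icc (-1 : ℝ) 1 × Set.Icc (-1 : ℝ) 1 | dist p.1 p.2 < δ} n := by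
    intro n
    choose z hz hzk using aux_itin f hf a m b ham hmb hfa hfb hfm.le n
    let e : (Fin n → Bool) → (ℕ → Bool) := fun w k => if h : k < n then w ⟨k, h⟩ else true
    let Z : (Fin n → Bool) → Set.Icc (-1 : ℝ) 1 := fun w =>
      ⟨z (e w), ha.trans (hz _).1, (hz _).2.trans hb1⟩
    have hsep : ∀ w w', w ≠ w' → ∃ k < n, 2 * δ ≤ |f^[k] (Z w) - f^[k] (Z w')| := by
      intro w w' hne
      obtain ⟨i, hi⟩ := Function.ne_iff.1 hne
      refine ⟨i, i.2, ?_⟩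
      have h1 := hzk (e w) i i.2
      have h2 := hzk (e w') i i.2
      have e1 : e w i = w i := by simp [e]
      have e2 : e w' i = w' i := by simp [e]
      rw [e1, Function.iterate_succ_apply'] at h1
      rw [e2, Function.iterate_succ_apply'] at h2
      have f1 := hfar _ h1.1
      have f2 := hfar _ h2.1
      change 2 * δ ≤ |f^[i] (z (e w)) - f^[i] (z (e w'))|
      generalize f^[i] (z (e w)) = u at *
      generalize f^[i] (z (e w')) = v at *
      rcases h1 with ⟨-, h1⟩
      rcases h2 with ⟨-, h2⟩
      cases hA : w i <;> cases hB : w' i <;> simp [hA, hB] at hi h1 h2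
      · rw [abs_of_nonneg (by linarith)] at f1
        rw [abs_of_nonpos (by linarith)] at f2
        exact le_abs.2 (Or.inl (by linarith))
      · rw [abs_of_nonpos (by linarith)] at f1
        rw [abs_of_nonneg (by linarith)] at f2
        exact le_abs.2 (Or.inr (by linarith))
    have hinj : Function.Injective Z := by
      intro w w' h
      by_contra hne
      obtain ⟨k, -, hk⟩ := hsep w w' hne
      rw [h, sub_self, abs_zero] at hk
      linarith
    have hnet : IsDynNetIn (Set.MapsTo.restrict f _ _ hm) Set.univ
        {p : Set.Icc (-1 : ℝ) 1 × Set.Icc (-1 : ℝ) 1 | dist p.1 p.2 < δ} n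
        ((Finset.univ.image Z : Finset _) : Set _) := by
      refine ⟨Set.subset_univ _, ?_⟩
      intro x hx y hy hxy
      simp only [Finset.coe_image, Finset.coe_univ, Set.image_univ, Set.mem_range] at hx hy
      obtain ⟨w, rfl⟩ := hx
      obtain ⟨w', rfl⟩ := hy
      obtain ⟨k, hkn, hk⟩ := hsep w w' (fun h => hxy (by rw [h]))
      refine Set.disjoint_left.2 fun q hq hq' => ?_
      have g1 := mem_dynEntourage.1 hq k hkn
      have g2 := mem_dynEntourage.1 hq' k hkn
      change dist _ _ < δ at g1
      change dist _ _ < δ at g2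
      rw [hm.iterate_restrict k, Subtype.dist_eq, Set.MapsTo.val_restrict_apply,
        Set.MapsTo.val_restrict_apply] at g1 g2
      have := dist_triangle_right (f^[k] (Z w)) (f^[k] (Z w')) (f^[k] q)
      rw [← Real.dist_eq] at hk
      linarith
    have hcard := hnet.card_le_netMaxcard
    rw [Finset.card_image_of_injective _ hinj] at hcard
    simpa using hcard
  have hb : ∀ b : ENNReal, expGrowthSup (fun n => b ^ n) = ENNReal.log b := fun b => expGrowthSup_pow
  have hlog : ENNReal.log 2 = (Real.log 2 : EReal) := by
    rw [← ENNReal.log_ofReal_of_pos (by norm_num)]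
    simp
  rw [← hlog, ← hb]
  refine expGrowthSup_monotone fun n => ?_
  have := ENat.toENNReal_mono (key n)
  refine le_trans (le_of_eq ?_) this
  simp

lemma aux_quad (A B C : ℝ) (h : A ≠ 0 ∨ B ≠ 0 ∨ C ≠ 0) :
    ∃ P : Finset ℝ, P.card ≤ 2 ∧ ∀ x, A * x ^ 2 + B * x + C = 0 → x ∈ P := by
  classical
  open Polynomial in
  set p : ℝ[X] := Polynomial.C A * X ^ 2 + Polynomial.C B * X + Polynomial.C C with hp
  have hp0 : p ≠ 0 := by
    intro h0
    have c0 : p.coeff 0 = C := by simp [hp]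
    have c1 : p.coeff 1 = B := by simp [hp, Polynomial.coeff_X, Polynomial.coeff_C]
    have c2 : p.coeff 2 = A := by simp [hp, Polynomial.coeff_X, Polynomial.coeff_C]
    rw [h0] at c0 c1 c2
    simp at c0 c1 c2
    grind
  refine ⟨p.roots.toFinset, ?_, ?_⟩
  · refine (Multiset.toFinset_card_le _).trans ((Polynomial.card_roots' p).trans ?_)
    exact Polynomial.natDegree_quadratic_le
  · intro x hx
    rw [Multiset.mem_toFinset, Polynomial.mem_roots hp0, Polynomial.IsRoot.def]
    simpa [hp] using hx


/-- Observation 4.i: for `μ < −4`, `t < 0` outside the parabola `μ = 1 − t²/4`, the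
normal-form map `f_{μ,t}` preserves `[−1,1]` and the topological entropy of the induced
self-map of `[−1,1]` is `log 2`. -/
theorem entropy_log_two_outside_parabola (μ t : ℝ) (hμ : μ < -4) (ht : t < 0)
    (hpar : 0 < t ^ 2 / 4 + μ - 1) :
    ∃ hmaps : Set.MapsTo
        (fun x : ℝ => 2 * μ * x * (t * x + 2) / (μ ^ 2 * x ^ 2 + (t * x + 2) ^ 2))
        (Set.Icc (-1 : ℝ) 1) (Set.Icc (-1 : ℝ) 1),
      Dynamics.coverEntropy (Set.MapsTo.restrict _ _ _ hmaps) Set.univ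
        = (Real.log 2 : EReal) := by
  have hμ0 : μ ≠ 0 := by linarith
  have ht4 : t < -4 := by nlinarith
  have hden : ∀ x : ℝ, 0 < μ ^ 2 * x ^ 2 + (t * x + 2) ^ 2 := by
    intro x
    by_cases hx : x = 0
    · subst hx; norm_num
    · positivity
  have hm : Set.MapsTo
        (fun x : ℝ => 2 * μ * x * (t * x + 2) / (μ ^ 2 * x ^ 2 + (t * x + 2) ^ 2))
        (Set.Icc (-1 : ℝ) 1) (Set.Icc (-1 : ℝ) 1) := by
    intro x _
    refine ⟨?_, ?_⟩
    · rw [le_div_iff₀ (hden x)]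
      nlinarith [sq_nonneg (μ * x + (t * x + 2))]
    · rw [div_le_iff₀ (hden x)]
      nlinarith [sq_nonneg (μ * x - (t * x + 2))]
  have hf : Continuous
      (fun x : ℝ => 2 * μ * x * (t * x + 2) / (μ ^ 2 * x ^ 2 + (t * x + 2) ^ 2)) :=
    Continuous.div (by fun_prop) (by fun_prop) (fun x => (hden x).ne')
  refine ⟨hm, le_antisymm (aux_upper _ hf hm ?_) ?_⟩
  · intro y
    obtain ⟨P, hP, hPm⟩ := aux_quad (y * (μ ^ 2 + t ^ 2) - 2 * μ * t) (4 * t * y - 4 * μ) (4 * y)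
      (by
        by_cases hy : y = 0
        · right; left; subst hy; simpa using hμ0
        · right; right; simpa using hy)
    refine ⟨P, hP, fun x hx => hPm x ?_⟩
    rw [div_eq_iff (hden x).ne'] at hx
    linarith
  · set D := Real.sqrt (t ^ 2 - 4 + 4 * μ) with hD
    have hD2 : D ^ 2 = t ^ 2 - 4 + 4 * μ := Real.sq_sqrt (by linarith)
    have hDpos : 0 < D := Real.sqrt_pos.2 (by linarith)
    obtain ⟨w, hw⟩ : ∃ w, w = (-t + D) / 2 := ⟨_, rfl⟩
    have hweq : 1 + w ^ 2 = μ - t * w := by rw [hw]; nlinarith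
    have hwt : -t < 2 * w := by linarith
    have hw2 : 2 < w := by linarith
    have hq : μ * w - t < -4 := by nlinarith
    have h1w : 0 < 1 + w ^ 2 := by positivity
    have hμt : μ + t < 0 := by linarith
    refine aux_lower _ hf hm (2 / (μ * w - t)) (-2 / (μ + t)) (2 * w / (1 + w ^ 2))
      ?_ ?_ ?_ ?_ ?_ ?_ ?_
    · rw [le_div_iff_of_neg (by linarith)]; linarith
    · rw [div_le_one h1w]; nlinarith [sq_nonneg (w - 1)]
    · have h1 : 2 / (μ * w - t) ≤ 0 := div_nonpos_of_nonneg_of_nonpos (by norm_num) (by linarith)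
      have h2 : 0 ≤ -2 / (μ + t) := div_nonneg_of_nonpos (by norm_num) hμt.le
      linarith
    · rw [div_le_iff_of_neg hμt, div_mul_eq_mul_div, div_le_iff₀ h1w]
      nlinarith
    · have hne : μ * w - t ≠ 0 := by linarith
      have e1 : t * (2 / (μ * w - t)) + 2 = 2 * μ * w / (μ * w - t) := by field_simp; ring
      simp only [e1]
      have := (hden (2 / (μ * w - t))).ne'
      rw [e1] at this
      rw [div_eq_div_iff this h1w.ne']
      field_simp
    · have hne : μ - t * w ≠ 0 := by rw [← hweq]; exact h1w.ne'
      have e1 : t * (2 * w / (1 + w ^ 2)) + 2 = 2 * μ / (1 + w ^ 2) := by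
        rw [eq_div_iff h1w.ne', add_mul, mul_assoc, div_mul_cancel₀ _ h1w.ne']
        linarith
      have := (hden (2 * w / (1 + w ^ 2))).ne'
      simp only [e1] at this ⊢
      rw [div_eq_div_iff this h1w.ne']
      field_simp
      ring
    · have hne : μ + t ≠ 0 := hμt.ne
      have e1 : t * (-2 / (μ + t)) + 2 = 2 * μ / (μ + t) := by
        field_simp; ring
      have := (hden (-2 / (μ + t))).ne'
      simp only [e1] at this ⊢
      have e2 : 2 * μ * (-2 / (μ + t)) * (2 * μ / (μ + t)) / (μ ^ 2 * (-2 / (μ + t)) ^ 2 + (2 * μ / (μ + t)) ^ 2) = -1 := by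
        rw [div_eq_iff this]
        field_simp
        ring
      rw [e2, lt_div_iff_of_neg (by linarith)]
      linarith
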